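/- arXiv:1908.04328 — 3 statements merged into one kernel-verified Lean document; each statement's English description precedes it below -/
import Mathlib

section
/- Let m1, m2 : [0,1] → ℝ be twice continuously differentiable functions with m1''(x) > 0 and m2''(x) > 0 for all x ∈ [0,1]. Fix c ∈ (0,1) and assume m2'(0) ≤ m1'(0) and m1'(1−c) ≤ m2'(1). Then the following two statements are equivalent: (1) there exists a constant d ∈ ℝ such that m1(t) = m2(t+c) + d for all t ∈ [0, 1−c]; (2) (m2')⁻¹(m1'(0)) = c and the derivative of the inverse function (m1')⁻¹ equals the derivative of the inverse function (m2')⁻¹ at every point u ∈ (m1'(0), m1'(1−c)), i.e., ((m1')⁻¹)'(u) = ((m2')⁻¹)'(u) for all such u. -/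
open Set

lemma aux_const (f : ℝ → ℝ) (b : ℝ) (hf : ContinuousOn f (Icc 0 b))
    (hd : ∀ x ∈ Ioo 0 b, HasDerivAt f 0 x) : ∀ x ∈ Icc 0 b, f x = f 0 := by
  intro x hx
  rcases hx.1.eq_or_lt with h | h
  · rw [← h]
  · obtain ⟨y, _, hy⟩ := exists_hasDerivAt_eq_slope f (fun _ => 0) h
      (hf.mono (Icc_subset_Icc_right hx.2)) (fun y hy => hd y ⟨hy.1, hy.2.trans_le hx.2⟩)
    have h2 : x - 0 ≠ 0 := by linarith
    field_simp at hy
    linarith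

lemma aux_shift (f1 f2 f1' f2' : ℝ → ℝ) (c d : ℝ) (hc : c ∈ Ioo (0:ℝ) 1)
    (h1 : ∀ x ∈ Icc (0:ℝ) 1, HasDerivWithinAt f1 (f1' x) (Icc 0 1) x)
    (h2 : ∀ x ∈ Icc (0:ℝ) 1, HasDerivWithinAt f2 (f2' x) (Icc 0 1) x)
    (h : ∀ t ∈ Icc (0:ℝ) (1 - c), f1 t = f2 (t + c) + d) :
    ∀ t ∈ Icc (0:ℝ) (1 - c), f1' t = f2' (t + c) := by
  obtain ⟨hc0, hc1⟩ := hc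
  intro t ht
  have a1 : HasDerivWithinAt f1 (f1' t) (Icc 0 (1 - c)) t :=
    (h1 t ⟨ht.1, by linarith [ht.2]⟩).mono (Icc_subset_Icc_right (by linarith))
  have a2 : HasDerivWithinAt (fun t => f2 (t + c)) (f2' (t + c) * 1) (Icc 0 (1 - c)) t :=
    HasDerivWithinAt.comp (h := fun t => t + c) (s' := Icc 0 1) t
      (h2 (t + c) ⟨by linarith [ht.1], by linarith [ht.2]⟩)
      ((hasDerivWithinAt_id t _).add_const c)
      (fun y hy => ⟨by linarith [hy.1], by linarith [hy.2]⟩)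
  have a3 : HasDerivWithinAt f1 (f2' (t + c) * 1) (Icc 0 (1 - c)) t :=
    (a2.add_const d).congr h (h t ht)
  have := (uniqueDiffOn_Icc (by linarith : (0:ℝ) < 1 - c) t ht).eq_deriv _ a1 a3
  linarith

lemma aux_mono (p p' : ℝ → ℝ)
    (h1 : ∀ x ∈ Icc (0:ℝ) 1, HasDerivWithinAt p (p' x) (Icc 0 1) x)
    (hpos : ∀ x ∈ Icc (0:ℝ) 1, 0 < p' x) : StrictMonoOn p (Icc 0 1) := by
  apply strictMonoOn_of_deriv_pos (convex_Icc 0 1) (fun x hx => (h1 x hx).continuousWithinAt)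
  intro x hx
  rw [interior_Icc] at hx
  rw [((h1 x (Ioo_subset_Icc_self hx)).hasDerivAt (Icc_mem_nhds hx.1 hx.2)).deriv]
  exact hpos x (Ioo_subset_Icc_self hx)

lemma aux_inv (p p' g g' : ℝ → ℝ)
    (h1 : ∀ x ∈ Icc (0:ℝ) 1, HasDerivWithinAt p (p' x) (Icc 0 1) x)
    (hpos : ∀ x ∈ Icc (0:ℝ) 1, 0 < p' x)
    (hgl : ∀ x ∈ Icc (0:ℝ) 1, g (p x) = x)
    (hgd : ∀ u ∈ Ioo (p 0) (p 1), HasDerivWithinAt g (g' u) (Icc (p 0) (p 1)) u) :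
    ∀ x ∈ Ioo (0:ℝ) 1, g' (p x) * p' x = 1 := by
  intro x hx
  have hm := aux_mono p p' h1 hpos
  have hx' := Ioo_subset_Icc_self hx
  have l : p 0 < p x := hm (by simp) hx' hx.1
  have r : p x < p 1 := hm hx' (by simp) hx.2
  have d1 := (hgd (p x) ⟨l, r⟩).hasDerivAt (Icc_mem_nhds l r)
  have d2 := (h1 x hx').hasDerivAt (Icc_mem_nhds hx.1 hx.2)
  have d3 := d1.comp x d2
  have d4 : HasDerivAt (g ∘ p) 1 x := by
    apply (hasDerivAt_id x).congr_of_eventuallyEq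
    filter_upwards [Icc_mem_nhds hx.1 hx.2] with y hy
    exact hgl y hy
  exact d3.unique d4

/-- Lemma 2.1 (full equivalence): for twice continuously differentiable convex
`m1, m2` on `[0,1]`, the curves differ by a horizontal shift `c` and a vertical
shift `d` iff the derivatives of the inverses of `m1'` and `m2'` coincide on
`(m1'(0), m1'(1-c))` and `(m2')⁻¹(m1'(0)) = c`. -/
theorem shift_iff_deriv_of_inverse_eq
    (m1 m2 m1' m2' m1'' m2'' : ℝ → ℝ)
    (hm1d : ∀ x ∈ Icc (0:ℝ) 1, HasDerivWithinAt m1 (m1' x) (Icc 0 1) x)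
    (hm1d2 : ∀ x ∈ Icc (0:ℝ) 1, HasDerivWithinAt m1' (m1'' x) (Icc 0 1) x)
    (hm1c : ContinuousOn m1'' (Icc 0 1))
    (hm2d : ∀ x ∈ Icc (0:ℝ) 1, HasDerivWithinAt m2 (m2' x) (Icc 0 1) x)
    (hm2d2 : ∀ x ∈ Icc (0:ℝ) 1, HasDerivWithinAt m2' (m2'' x) (Icc 0 1) x)
    (hm2c : ContinuousOn m2'' (Icc 0 1))
    (hm1pos : ∀ x ∈ Icc (0:ℝ) 1, 0 < m1'' x)
    (hm2pos : ∀ x ∈ Icc (0:ℝ) 1, 0 < m2'' x)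
    (c : ℝ) (hc : c ∈ Ioo (0:ℝ) 1)
    (hlow : m2' 0 ≤ m1' 0) (hhigh : m1' (1 - c) ≤ m2' 1)
    -- g1 and g2 are the inverses of m1' and m2' on their respective ranges
    (g1 g2 g1' g2' : ℝ → ℝ)
    (hg1l : ∀ x ∈ Icc (0:ℝ) 1, g1 (m1' x) = x)
    (hg1r : ∀ s ∈ Icc (m1' 0) (m1' 1), m1' (g1 s) = s)
    (hg2l : ∀ x ∈ Icc (0:ℝ) 1, g2 (m2' x) = x)
    (hg2r : ∀ s ∈ Icc (m2' 0) (m2' 1), m2' (g2 s) = s)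
    -- g1' and g2' are the derivatives of the inverse functions
    (hg1d : ∀ u ∈ Ioo (m1' 0) (m1' 1),
      HasDerivWithinAt g1 (g1' u) (Icc (m1' 0) (m1' 1)) u)
    (hg2d : ∀ u ∈ Ioo (m2' 0) (m2' 1),
      HasDerivWithinAt g2 (g2' u) (Icc (m2' 0) (m2' 1)) u) :
    (∃ d : ℝ, ∀ t ∈ Icc (0:ℝ) (1 - c), m1 t = m2 (t + c) + d) ↔
      (g2 (m1' 0) = c ∧ ∀ u ∈ Ioo (m1' 0) (m1' (1 - c)), g1' u = g2' u) := by
  have M1 := aux_mono m1' m1'' hm1d2 hm1pos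
  have M2 := aux_mono m2' m2'' hm2d2 hm2pos
  have I1 := aux_inv m1' m1'' g1 g1' hm1d2 hm1pos hg1l hg1d
  have I2 := aux_inv m2' m2'' g2 g2' hm2d2 hm2pos hg2l hg2d
  have hc' := hc
  obtain ⟨hc0, hc1⟩ := hc'
  constructor
  · rintro ⟨d, hd⟩
    have e1 := aux_shift m1 m2 m1' m2' c d hc hm1d hm2d hd
    have e2 := aux_shift m1' m2' m1'' m2'' c 0 hc hm1d2 hm2d2
      (fun t ht => by rw [e1 t ht, add_zero])
    refine ⟨?_, ?_⟩
    · rw [e1 0 ⟨le_rfl, by linarith⟩, zero_add]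
      exact hg2l c ⟨hc0.le, hc1.le⟩
    · intro u hu
      have hcont : ContinuousOn m1' (Icc 0 (1 - c)) := fun x hx =>
        ((hm1d2 x ⟨hx.1, by linarith [hx.2]⟩).continuousWithinAt).mono
          (Icc_subset_Icc_right (by linarith))
      obtain ⟨t, ht, rfl⟩ := intermediate_value_Ioo (by linarith) hcont hu
      have ht' := Ioo_subset_Icc_self ht
      have i1 := I1 t ⟨ht.1, by linarith [ht.2]⟩
      have i2 := I2 (t + c) ⟨by linarith [ht.1], by linarith [ht.2]⟩
      rw [← e1 t ht', ← e2 t ht'] at i2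
      exact mul_right_cancel₀ (hm1pos t ⟨ht.1.le, by linarith [ht.2]⟩).ne' (i1.trans i2.symm)
  · rintro ⟨hgc, hder⟩
    have hlt : m1' 0 < m1' (1 - c) :=
      M1 (by simp) ⟨by linarith, by linarith⟩ (by linarith)
    have h0 : m2' c = m1' 0 := by
      rw [← hgc]; exact hg2r _ ⟨hlow, by linarith⟩
    have h0' : m2' 0 < m1' 0 := by
      rw [← h0]; exact M2 (by simp) ⟨hc0.le, hc1.le⟩ hc0
    -- range facts
    have R : ∀ t, 0 ≤ t → t < 1 - c → m1' 0 ≤ m1' t ∧ m1' t < m1' (1 - c) := by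
      intro t t0 t1
      exact ⟨M1.monotoneOn (by simp) ⟨t0, by linarith⟩ t0,
        M1 ⟨t0, by linarith⟩ ⟨by linarith, by linarith⟩ t1⟩
    have G : ∀ t, 0 ≤ t → t < 1 - c → HasDerivAt g2 (g2' (m1' t)) (m1' t) := by
      intro t t0 t1
      obtain ⟨a, b⟩ := R t t0 t1
      have l : m2' 0 < m1' t := by linarith
      have r : m1' t < m2' 1 := by linarith
      exact (hg2d _ ⟨l, r⟩).hasDerivAt (Icc_mem_nhds l r)
    have key : ∀ t, 0 ≤ t → t < 1 - c → m1' t = m2' (t + c) := by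
      intro t t0 t1
      have hk := aux_const (fun x => g2 (m1' x) - x) t ?_ ?_ t ⟨t0, le_rfl⟩
      · simp only [hgc] at hk
        have : g2 (m1' t) = t + c := by linarith
        rw [← this]
        obtain ⟨a, b⟩ := R t t0 t1
        exact (hg2r _ ⟨by linarith, by linarith⟩).symm
      · intro x hx
        have a := (G x hx.1 (by linarith [hx.2])).continuousAt
        have b : ContinuousWithinAt m1' (Icc 0 t) x :=
          ((hm1d2 x ⟨hx.1, by linarith [hx.2]⟩).continuousWithinAt).mono
            (Icc_subset_Icc_right (by linarith))
        exact (a.comp_continuousWithinAt b).sub continuousWithinAt_id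
      · intro x hx
        have hx1 : x < 1 - c := by linarith [hx.2]
        have a := G x hx.1.le hx1
        have b := (hm1d2 x ⟨hx.1.le, by linarith⟩).hasDerivAt
          (Icc_mem_nhds hx.1 (by linarith))
        have e := (a.comp x b).sub (hasDerivAt_id x)
        have hu : m1' 0 < m1' x := M1 (by simp) ⟨hx.1.le, by linarith⟩ hx.1
        rw [← hder _ ⟨hu, (R x hx.1.le hx1).2⟩, I1 x ⟨hx.1, by linarith⟩, sub_self] at e
        exact e
    refine ⟨m1 0 - m2 (0 + c), fun t ht => ?_⟩
    have hk := aux_const (fun x => m1 x - m2 (x + c)) (1 - c) ?_ ?_ t ht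
    · linarith
    · have b1 : ContinuousOn m1 (Icc 0 (1 - c)) := fun x hx =>
        ((hm1d x ⟨hx.1, by linarith [hx.2]⟩).continuousWithinAt).mono
          (Icc_subset_Icc_right (by linarith))
      have b2 : ContinuousOn m2 (Icc 0 1) := fun x hx => (hm2d x hx).continuousWithinAt
      refine b1.sub (b2.comp (by fun_prop) ?_)
      intro y hy
      exact ⟨by linarith [hy.1], by linarith [hy.2]⟩
    · intro x hx
      have b1 := (hm1d x ⟨hx.1.le, by linarith [hx.2]⟩).hasDerivAt
        (Icc_mem_nhds hx.1 (by linarith [hx.2]))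
      have l : 0 < x + c := by linarith [hx.1]
      have r : x + c < 1 := by linarith [hx.2]
      have b2 := ((hm2d (x + c) ⟨l.le, r.le⟩).hasDerivAt (Icc_mem_nhds l r)).comp_add_const x c
      have e := b1.sub b2
      rw [key x hx.1.le hx.2, sub_self] at e
      exact e
end

section
/- Let m : [0,1] → ℝ be twice continuously differentiable such that m'' is Lipschitz continuous on [0,1] and m''(x) ≥ κ for all x ∈ [0,1] and some κ > 0. Let K_d : ℝ → ℝ be a continuous nonnegative function vanishing outside [−1,1] with ∫_{−1}^{1} K_d(u) du = 1, and let η ∈ (0, (m'(1) − m'(0))/2). Then there exists a constant C > 0 such that for all h ∈ (0, η] and all t ∈ [m'(0) + η, m'(1) − η]: | (1/h) ∫₀¹ K_d( (m'(x) − t)/h ) dx − 1 / m''( (m')⁻¹(t) ) | ≤ C · h. -/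
open Set

theorem kd_aux (Kd : ℝ → ℝ) (hKc : Continuous Kd)
    (hKsupp : ∀ x : ℝ, 1 < |x| → Kd x = 0)
    (hKint : ∫ u in (-1:ℝ)..1, Kd u = 1) (A B : ℝ) (hA : A ≤ -1) (hB : 1 ≤ B) :
    ∫ u in A..B, Kd u = 1 := by
  have hcl : IsClosed {x | Kd x = 0} := isClosed_eq hKc continuous_const
  have h1 : Kd (-1) = 0 := by
    have hs : Iio (-1:ℝ) ⊆ {x | Kd x = 0} := fun x hx => hKsupp x (by
      have hx' : x < -1 := hx
      rw [abs_of_neg (by linarith)]; linarith)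
    have := hcl.closure_subset_iff.2 hs
    rw [closure_Iio] at this
    exact this (by simp)
  have hsup : Function.support Kd ⊆ Ioc (-1:ℝ) 1 := by
    intro x hx
    have hx' : Kd x ≠ 0 := hx
    have h2 : |x| ≤ 1 := by
      by_contra hc
      exact hx' (hKsupp x (not_le.1 hc))
    rw [abs_le] at h2
    refine ⟨lt_of_le_of_ne h2.1 ?_, h2.2⟩
    rintro rfl
    exact hx' h1
  rw [← hKint, intervalIntegral.integral_eq_integral_of_support_subset hsup,
    intervalIntegral.integral_eq_integral_of_support_subset
      (hsup.trans (Ioc_subset_Ioc hA hB))]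

/-- Uniform `O(h)` bias bound for the inverse-regression kernel estimator on a
compact interior interval `[m'(0) + η, m'(1) - η]`. -/
theorem kernel_density_uniform_bias_bound
    (m m' m'' g Kd : ℝ → ℝ) (κ : ℝ) (hκ : 0 < κ)
    (hm : ∀ x ∈ Icc (0:ℝ) 1, HasDerivWithinAt m (m' x) (Icc 0 1) x)
    (hm' : ∀ x ∈ Icc (0:ℝ) 1, HasDerivWithinAt m' (m'' x) (Icc 0 1) x)
    (hm''c : ContinuousOn m'' (Icc 0 1))
    (hm''lip : ∃ Lm : NNReal, LipschitzOnWith Lm m'' (Icc 0 1))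
    (hm''ge : ∀ x ∈ Icc (0:ℝ) 1, κ ≤ m'' x)
    (hKc : Continuous Kd) (hKnn : ∀ x : ℝ, 0 ≤ Kd x)
    (hKsupp : ∀ x : ℝ, 1 < |x| → Kd x = 0)
    (hKint : ∫ u in (-1:ℝ)..1, Kd u = 1)
    -- g is the inverse of m' on [m'(0), m'(1)]
    (hgl : ∀ x ∈ Icc (0:ℝ) 1, g (m' x) = x)
    (hgr : ∀ s ∈ Icc (m' 0) (m' 1), m' (g s) = s)
    (η : ℝ) (hη : η ∈ Ioo (0:ℝ) ((m' 1 - m' 0) / 2)) :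
    ∃ C > (0:ℝ), ∀ h ∈ Ioc (0:ℝ) η, ∀ t ∈ Icc (m' 0 + η) (m' 1 - η),
      |(1 / h) * (∫ x in (0:ℝ)..1, Kd ((m' x - t) / h)) - 1 / m'' (g t)|
        ≤ C * h := by
  obtain ⟨L, hL⟩ := hm''lip
  obtain ⟨hη0, hη1⟩ := hη
  have hm'c : ContinuousOn m' (Icc 0 1) := fun x hx => (hm' x hx).continuousWithinAt
  have hda : ∀ x ∈ Ioo (0:ℝ) 1, HasDerivAt m' (m'' x) x := fun x hx =>
    (hm' x (Ioo_subset_Icc_self hx)).hasDerivAt (Icc_mem_nhds hx.1 hx.2)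
  have hmv : ∀ x ∈ Icc (0:ℝ) 1, ∀ y ∈ Icc (0:ℝ) 1, x ≤ y → κ * (y - x) ≤ m' y - m' x := by
    refine (convex_Icc (0:ℝ) 1).mul_sub_le_image_sub_of_le_deriv hm'c ?_ ?_
    · rw [interior_Icc]
      exact fun x hx => (hda x hx).differentiableAt.differentiableWithinAt
    · rw [interior_Icc]
      intro x hx
      rw [(hda x hx).deriv]
      exact hm''ge x (Ioo_subset_Icc_self hx)
  have hmv' : ∀ x ∈ Icc (0:ℝ) 1, ∀ y ∈ Icc (0:ℝ) 1, κ * |y - x| ≤ |m' y - m' x| := by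
    intro x hx y hy
    rcases le_total x y with hxy | hxy
    · rw [abs_of_nonneg (sub_nonneg.2 hxy)]
      exact (hmv x hx y hy hxy).trans (le_abs_self _)
    · rw [abs_sub_comm, abs_of_nonneg (sub_nonneg.2 hxy), abs_sub_comm]
      exact (hmv y hy x hx hxy).trans (le_abs_self _)
  refine ⟨L / κ ^ 3 + 1, by positivity, ?_⟩
  rintro h ⟨hh0, hhη⟩ t ⟨ht0, ht1⟩
  obtain ⟨x0, hx0, hx0t⟩ : t ∈ m' '' Icc 0 1 :=
    intermediate_value_Icc zero_le_one hm'c ⟨by linarith, by linarith⟩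
  have hgt : g t = x0 := by rw [← hx0t, hgl x0 hx0]
  rw [hgt]
  have hc0 : κ ≤ m'' x0 := hm''ge x0 hx0
  have hc0p : 0 < m'' x0 := hκ.trans_le hc0
  have hu : uIcc (0:ℝ) 1 = Icc 0 1 := uIcc_of_le zero_le_one
  have hfc : ContinuousOn (fun x => (m' x - t) / h) (Icc 0 1) :=
    (hm'c.sub continuousOn_const).div_const h
  have hFc : ContinuousOn (fun x => Kd ((m' x - t) / h)) (Icc 0 1) :=
    hKc.comp_continuousOn hfc
  have hsub : ∫ x in (0:ℝ)..1, Kd ((m' x - t) / h) * (m'' x / h) = 1 := by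
    have := intervalIntegral.integral_comp_mul_deriv'' (a := (0:ℝ)) (b := 1)
      (f := fun x => (m' x - t) / h) (f' := fun x => m'' x / h) (g := Kd)
      (by rw [hu]; exact hfc)
      (by
        intro x hx
        rw [min_eq_left zero_le_one, max_eq_right zero_le_one] at hx
        exact (((hda x hx).sub_const t).div_const h).hasDerivWithinAt)
      (by rw [hu]; exact hm''c.div_const h) hKc.continuousOn
    simp only [Function.comp] at this
    rw [this]
    apply kd_aux Kd hKc hKsupp hKint
    · rw [div_le_iff₀ hh0]; linarith
    · rw [le_div_iff₀ hh0]; linarith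
  have hFi : IntervalIntegrable (fun x => Kd ((m' x - t) / h)) MeasureTheory.volume 0 1 :=
    ContinuousOn.intervalIntegrable (by rw [hu]; exact hFc)
  have hGi : IntervalIntegrable (fun x => Kd ((m' x - t) / h) * (m'' x / h))
      MeasureTheory.volume 0 1 :=
    ContinuousOn.intervalIntegrable (by rw [hu]; exact hFc.mul (hm''c.div_const h))
  have heq : (1 / h) * (∫ x in (0:ℝ)..1, Kd ((m' x - t) / h)) - 1 / m'' x0
      = ∫ x in (0:ℝ)..1, ((1 / h) * Kd ((m' x - t) / h)
          - (1 / m'' x0) * (Kd ((m' x - t) / h) * (m'' x / h))) := by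
    rw [intervalIntegral.integral_sub (hFi.const_mul _) (hGi.const_mul _),
      intervalIntegral.integral_const_mul, intervalIntegral.integral_const_mul, hsub, mul_one]
  have key : ∀ x ∈ Icc (0:ℝ) 1, ‖(1 / h) * Kd ((m' x - t) / h)
          - (1 / m'' x0) * (Kd ((m' x - t) / h) * (m'' x / h))‖
        ≤ (L / κ ^ 3 * h) * (Kd ((m' x - t) / h) * (m'' x / h)) := by
    intro x hx
    have hk := hKnn ((m' x - t) / h)
    by_cases hs : 1 < |(m' x - t) / h|
    · rw [hKsupp _ hs]; simp
    rw [not_lt, abs_div, abs_of_pos hh0, div_le_one hh0] at hs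
    set k := Kd ((m' x - t) / h)
    have e1 : κ * |x - x0| ≤ h := by
      have := hmv' x0 hx0 x hx
      rw [hx0t] at this
      exact this.trans hs
    have e2 : |m'' x - m'' x0| ≤ L * |x - x0| := by
      have := hL.dist_le_mul x hx x0 hx0
      simpa [Real.dist_eq] using this
    have e3 : |x - x0| ≤ h / κ := by rw [le_div_iff₀ hκ]; linarith
    have e4 : |m'' x - m'' x0| ≤ L * (h / κ) :=
      e2.trans (mul_le_mul_of_nonneg_left e3 L.2)
    have e5 : (1 / h) * k - (1 / m'' x0) * (k * (m'' x / h))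
        = -((k / h) * ((m'' x - m'' x0) / m'' x0)) := by
      field_simp
      ring
    rw [e5, norm_neg, Real.norm_eq_abs, abs_mul, abs_div, abs_div, abs_of_pos hh0,
      abs_of_nonneg hk, abs_of_pos hc0p]
    have e6 : |m'' x - m'' x0| / m'' x0 ≤ L * (h / κ) / κ := by
      have : (0:ℝ) ≤ L := L.2
      gcongr
    have e7 : 1 ≤ m'' x / κ := by rw [le_div_iff₀ hκ]; linarith [hm''ge x hx]
    have hLn : (0:ℝ) ≤ L := L.2
    calc k / h * (|m'' x - m'' x0| / m'' x0) ≤ k / h * (L * (h / κ) / κ) := by gcongr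
      _ = (k / h * (L * (h / κ) / κ)) * 1 := (mul_one _).symm
      _ ≤ (k / h * (L * (h / κ) / κ)) * (m'' x / κ) := by gcongr
      _ = _ := by field_simp
  rw [heq, ← Real.norm_eq_abs]
  have hb := intervalIntegral.norm_integral_le_of_norm_le (μ := MeasureTheory.volume)
    (zero_le_one' ℝ)
    (Filter.Eventually.of_forall fun x hx => key x (Ioc_subset_Icc_self hx))
    (hGi.const_mul (L / κ ^ 3 * h))
  rw [intervalIntegral.integral_const_mul, hsub, mul_one] at hb
  refine hb.trans ?_
  linarith
end

section
/- Let m : [0,1] → ℝ be twice continuously differentiable such that m'' is Lipschitz continuous on [0,1]. Let K : ℝ → ℝ be Lipschitz continuous with K(−x) = K(x) for all x and K(x) = 0 for |x| > 1, and assume κ₂ := ∫_{−1}^{1} K(x) x² dx > 0; set K°(x) := K(x)·x / κ₂. Then there exists a constant C > 0 such that for every integer n ≥ 1 and every b ∈ (0, 1/2] with n·b ≥ 1, and every t ∈ [b, 1−b]: | (1/(n b²)) Σ_{i=1}^{n} K°( (i/n − t)/b ) · m(i/n) − m'(t) | ≤ C · ( 1/(n b²) + b² ). -/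
open Set

lemma aux_mul_id (f : ℝ → ℝ) (L : ℝ) (hL : 0 ≤ L) (hf : ∀ x y, |f x - f y| ≤ L * |x - y|)
    (hs : ∀ x : ℝ, 1 < |x| → f x = 0) :
    (∀ x y, |f x * x - f y * y| ≤ (5 * L) * |x - y|) ∧ (∀ x : ℝ, 1 < |x| → f x * x = 0) := by
  have hb : ∀ x, |f x| ≤ 4 * L := by
    intro x
    by_cases hx : 1 < |x|
    · rw [hs x hx]; simp; positivity
    · push Not at hx
      have h3 : f 3 = 0 := hs 3 (by norm_num)
      have := hf x 3
      rw [h3, sub_zero] at this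
      have h4 : |x - 3| ≤ 4 := by
        rw [abs_le] at *; constructor <;> linarith [hx.1, hx.2]
      nlinarith
  have key : ∀ x y, |x| ≤ 1 → |f x * x - f y * y| ≤ (5 * L) * |x - y| := by
    intro x y hx
    have e : f x * x - f y * y = (f x - f y) * x + f y * (x - y) := by ring
    rw [e]
    refine (abs_add_le _ _).trans ?_
    rw [abs_mul, abs_mul]
    have h1 := hf x y
    have h2 := hb y
    have h3 : |f x - f y| * |x| ≤ L * |x - y| := by
      nlinarith [abs_nonneg (f x - f y)]
    have h4 : |f y| * |x - y| ≤ 4 * L * |x - y| := by gcongr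
    linarith
  refine ⟨fun x y => ?_, fun x hx => by rw [hs x hx, zero_mul]⟩
  by_cases hx : |x| ≤ 1
  · exact key x y hx
  · by_cases hy : |y| ≤ 1
    · rw [abs_sub_comm, abs_sub_comm x y]; exact key y x hy
    · push Not at hx hy
      rw [hs x hx, hs y hy]; simp; positivity

lemma aux_riemann (f : ℝ → ℝ) (L : ℝ) (hL : 0 ≤ L) (hf : ∀ x y, |f x - f y| ≤ L * |x - y|)
    (hs : ∀ x : ℝ, 1 < |x| → f x = 0) (n : ℕ) (h s : ℝ) (hh : 0 < h) (hh1 : h ≤ 1)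
    (hl : 1 ≤ s) (hr : 1 ≤ n * h - s) :
    |h * ∑ i ∈ Finset.Icc 1 n, f (i * h - s) - ∫ x in (-1:ℝ)..1, f x| ≤ 4 * L * h := by
  have hc : Continuous f := by
    have : LipschitzWith ⟨L, hL⟩ f := LipschitzWith.of_dist_le_mul (by
      intro x y; simp only [Real.dist_eq]; exact hf x y)
    exact this.continuous
  have hint : ∀ a b, IntervalIntegrable f MeasureTheory.volume a b :=
    fun a b => hc.intervalIntegrable a b
  have hz : ∀ x : ℝ, 1 ≤ |x| → f x = 0 := by
    intro x hx
    by_contra hne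
    have hpos : 0 < |f x| := abs_pos.mpr hne
    have hx1 : |x| = 1 := by
      by_contra h'
      exact hne (hs x (lt_of_le_of_ne hx (Ne.symm h')))
    have hall : ∀ e : ℝ, 0 < e → |f x| ≤ 0 + L * e := by
      intro e he
      have := hf x (x * (1 + e))
      rw [hs (x * (1 + e)) (by rw [abs_mul, hx1, abs_of_pos (by linarith)]; linarith)] at this
      have e2 : x - x * (1 + e) = - (x * e) := by ring
      rw [e2, abs_neg, abs_mul, hx1, abs_of_pos he] at this
      simpa using this
    have := hall (|f x| / (2 * (L + 1))) (by positivity)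
    have h3 : L * (|f x| / (2 * (L + 1))) < |f x| := by
      rw [mul_div_assoc', div_lt_iff₀ (by positivity)]
      nlinarith
    linarith
  let g : ℝ → ℝ := (Icc (-2:ℝ) 2).indicator (fun _ => L * h)
  have hgI : MeasureTheory.Integrable g := by
    rw [MeasureTheory.integrable_indicator_iff measurableSet_Icc]
    exact MeasureTheory.integrableOn_const (by simp)
  have hg0 : ∀ x, 0 ≤ g x := fun x => Set.indicator_nonneg (fun _ _ => by positivity) x
  have hgint : ∀ a b, IntervalIntegrable g MeasureTheory.volume a b :=
    fun a b => hgI.intervalIntegrable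
  have hgtot : ∫ x, g x = 4 * L * h := by
    rw [MeasureTheory.integral_indicator measurableSet_Icc]
    simp
    ring_nf
    try norm_num
  have hpt : ∀ x y : ℝ, |x - y| ≤ h → |f x - f y| ≤ g y := by
    intro x y hxy
    by_cases hy : y ∈ Icc (-2:ℝ) 2
    · have : g y = L * h := Set.indicator_of_mem hy _
      rw [this]
      exact (hf x y).trans (by gcongr)
    · have hgy : g y = 0 := Set.indicator_of_notMem hy _
      have hy2 : 2 < |y| := by
        by_contra h'
        push Not at h'
        exact hy (abs_le.mp h')
      have hx1 : 1 ≤ |x| := by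
        have := abs_sub_abs_le_abs_sub y x
        rw [abs_sub_comm] at this
        linarith
      rw [hgy, hz x hx1, hz y (by linarith)]; simp
  let p : ℕ → ℝ := fun i => i * h - s
  have hp1 : ∀ i, p (i + 1) = p i + h := by intro i; simp only [p]; push_cast; ring
  have hfull : ∫ x in (p 0)..(p n), f x = ∫ x in (-1:ℝ)..1, f x := by
    rw [← intervalIntegral.integral_add_adjacent_intervals (hint (p 0) (-1)) (hint (-1) (p n)),
      ← intervalIntegral.integral_add_adjacent_intervals (hint (-1) 1) (hint 1 (p n))]
    have h1 : ∫ x in (p 0)..(-1), f x = 0 := by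
      apply intervalIntegral.integral_zero_ae
      refine Filter.Eventually.of_forall fun x hx => hz x ?_
      rw [uIoc_of_le (by simp [p]; linarith)] at hx
      rw [le_abs]; right; linarith [hx.2]
    have h2 : ∫ x in (1)..(p n), f x = 0 := by
      apply intervalIntegral.integral_zero_ae
      refine Filter.Eventually.of_forall fun x hx => hz x ?_
      rw [uIoc_of_le (by simp [p]; linarith)] at hx
      rw [le_abs]; left; linarith [hx.1]
    rw [h1, h2]; ring
  have hsum : ∑ i ∈ Finset.Icc 1 n, f (i * h - s) = ∑ i ∈ Finset.range n, f (p (i + 1)) := by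
    rw [Finset.range_eq_Ico, Finset.sum_Ico_add' (fun i => f (p i)) 0 n 1]
    rfl
  rw [← hfull, hsum, ← intervalIntegral.sum_integral_adjacent_intervals (fun k _ => hint _ _),
    Finset.mul_sum, ← Finset.sum_sub_distrib]
  refine (Finset.abs_sum_le_sum_abs _ _).trans ?_
  have hterm : ∀ i ∈ Finset.range n,
      |h * f (p (i + 1)) - ∫ x in (p i)..(p (i + 1)), f x| ≤ ∫ x in (p i)..(p (i + 1)), g x := by
    intro i _
    have e : h * f (p (i + 1)) = ∫ x in (p i)..(p (i + 1)), f (p (i + 1)) := by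
      rw [intervalIntegral.integral_const, hp1]; simp
    rw [e, ← intervalIntegral.integral_sub (by simp) (hint _ _), ← Real.norm_eq_abs]
    apply intervalIntegral.norm_integral_le_of_norm_le (by rw [hp1]; linarith) _ (hgint _ _)
    refine Filter.Eventually.of_forall fun x hx => ?_
    rw [Real.norm_eq_abs]
    apply hpt
    have := hp1 i
    rw [abs_le]; constructor <;> linarith [hx.1, hx.2]
  refine (Finset.sum_le_sum hterm).trans ?_
  rw [intervalIntegral.sum_integral_adjacent_intervals (fun k _ => hgint _ _), ← hgtot,
    intervalIntegral.integral_of_le (by simp [p]; positivity)]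
  exact MeasureTheory.setIntegral_le_integral hgI (Filter.Eventually.of_forall hg0)

lemma aux_taylor (m m' m'' : ℝ → ℝ)
    (hm : ∀ x ∈ Icc (0:ℝ) 1, HasDerivWithinAt m (m' x) (Icc 0 1) x)
    (hm' : ∀ x ∈ Icc (0:ℝ) 1, HasDerivWithinAt m' (m'' x) (Icc 0 1) x)
    (L : ℝ) (hL : ∀ x ∈ Icc (0:ℝ) 1, ∀ y ∈ Icc (0:ℝ) 1, |m'' x - m'' y| ≤ L * |x - y|)
    (hL0 : 0 ≤ L) (t : ℝ) (ht : t ∈ Icc (0:ℝ) 1) (y : ℝ) (hy : y ∈ Icc (0:ℝ) 1) :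
    |m y - m t - m' t * (y - t) - m'' t / 2 * (y - t)^2| ≤ L * |y - t|^3 := by
  have hsub : ∀ z ∈ Icc (0:ℝ) 1, uIcc t z ⊆ Icc (0:ℝ) 1 := fun z hz => by
    rw [← uIcc_of_le (zero_le_one' ℝ)] at *
    exact uIcc_subset_uIcc ht hz
  have hab : ∀ z x, x ∈ uIcc t z → |x - t| ≤ |z - t| := fun z x hx =>
    abs_sub_left_of_mem_uIcc hx
  have h1 : ∀ z ∈ Icc (0:ℝ) 1, |m' z - m' t - m'' t * (z - t)| ≤ L * |z - t|^2 := by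
    intro z hz
    have := (convex_uIcc t z).norm_image_sub_le_of_norm_hasDerivWithin_le
      (f := fun x => m' x - m'' t * (x - t)) (f' := fun x => m'' x - m'' t * 1)
      (C := L * |z - t|) (x := t) (y := z)
      (fun x hx => ((hm' x (hsub z hz hx)).mono (hsub z hz)).sub
        (((hasDerivWithinAt_id x _).sub_const t).const_mul _))
      (fun x hx => by
        rw [Real.norm_eq_abs, mul_one]
        refine (hL x (hsub z hz hx) t ht).trans ?_
        have := hab z x hx
        gcongr) left_mem_uIcc right_mem_uIcc
    simp only [Real.norm_eq_abs] at this
    calc _ = |m' z - m'' t * (z - t) - (m' t - m'' t * (t - t))| := by congr 1; ring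
      _ ≤ _ := this
      _ = _ := by ring
  have := (convex_uIcc t y).norm_image_sub_le_of_norm_hasDerivWithin_le
      (f := fun x => m x - m' t * (x - t) - m'' t / 2 * (x - t)^2)
      (f' := fun x => m' x - m' t * 1 - m'' t / 2 * (2 * (x - t)^(2-1) * 1))
      (C := L * |y - t|^2) (x := t) (y := y)
      (fun x hx => (((hm x (hsub y hy hx)).mono (hsub y hy)).sub
        (((hasDerivWithinAt_id x _).sub_const t).const_mul _)).sub
        ((((hasDerivWithinAt_id x _).sub_const t).pow 2).const_mul _))
      (fun x hx => by
        rw [Real.norm_eq_abs]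
        have e : m' x - m' t * 1 - m'' t / 2 * (2 * (x - t)^(2-1) * 1)
          = m' x - m' t - m'' t * (x - t) := by norm_num; ring
        rw [e]
        refine (h1 x (hsub y hy hx)).trans ?_
        have := hab y x hx
        gcongr) left_mem_uIcc right_mem_uIcc
  simp only [Real.norm_eq_abs] at this
  calc _ = |m y - m' t * (y - t) - m'' t / 2 * (y - t)^2
        - (m t - m' t * (t - t) - m'' t / 2 * (t - t)^2)| := by congr 1; ring
    _ ≤ _ := this
    _ = _ := by ring

lemma aux_odd (f : ℝ → ℝ) (hf : ∀ x, f (-x) = - f x) : ∫ x in (-1:ℝ)..1, f x = 0 := by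
  have h := intervalIntegral.integral_comp_neg (a := -1) (b := 1) f
  simp only [hf, intervalIntegral.integral_neg, neg_neg] at h
  linarith

set_option maxHeartbeats 1600000 in
/-- Deterministic (noise-free) part of Proposition 5.2(i): the local linear
estimator of the derivative, built from the equivalent derivative kernel
`K°(x) = K(x)·x / ∫ K(x)x² dx`, satisfies the uniform bias bound
`|(1/(nb²)) Σ_{i=1}^n K°((i/n - t)/b) m(i/n) - m'(t)| ≤ C (1/(nb²) + b²)`
on `[b, 1-b]`. -/
theorem local_linear_derivative_bias_bound
    (m m' m'' K : ℝ → ℝ) (κ₂ : ℝ)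
    (hm : ∀ x ∈ Icc (0:ℝ) 1, HasDerivWithinAt m (m' x) (Icc 0 1) x)
    (hm' : ∀ x ∈ Icc (0:ℝ) 1, HasDerivWithinAt m' (m'' x) (Icc 0 1) x)
    (hm''c : ContinuousOn m'' (Icc 0 1))
    (hm''lip : ∃ Lm : NNReal, LipschitzOnWith Lm m'' (Icc 0 1))
    (hKlip : ∃ L : NNReal, LipschitzWith L K)
    (hKeven : ∀ x : ℝ, K (-x) = K x)
    (hKsupp : ∀ x : ℝ, 1 < |x| → K x = 0)
    (hκ₂ : κ₂ = ∫ x in (-1:ℝ)..1, K x * x^2) (hκ₂pos : 0 < κ₂) :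
    ∃ C > (0:ℝ), ∀ n : ℕ, 1 ≤ n → ∀ b : ℝ, b ∈ Ioc (0:ℝ) (1/2) →
      1 ≤ (n:ℝ) * b → ∀ t ∈ Icc b (1 - b),
        |(1 / ((n:ℝ) * b^2)) *
            ∑ i ∈ Finset.Icc 1 n,
              (K (((i:ℝ)/(n:ℝ) - t) / b) * (((i:ℝ)/(n:ℝ) - t) / b) / κ₂)
                * m ((i:ℝ)/(n:ℝ))
          - m' t|
          ≤ C * (1 / ((n:ℝ) * b^2) + b^2) := by
  obtain ⟨Lm, hLm⟩ := hm''lip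
  obtain ⟨L, hL⟩ := hKlip
  have hK0 : ∀ x y, |K x - K y| ≤ (L:ℝ) * |x - y| := by
    intro x y; simpa only [Real.dist_eq] using hL.dist_le_mul x y
  have hT := aux_taylor m m' m'' hm hm' Lm
    (fun x hx y hy => by simpa only [Real.dist_eq] using hLm.dist_le_mul x hx y hy) Lm.2
  have hL0 : (0:ℝ) ≤ L := L.2
  have hLm0 : (0:ℝ) ≤ Lm := Lm.2
  obtain ⟨k1, s1⟩ := aux_mul_id K L hL0 hK0 hKsupp
  obtain ⟨k2, s2⟩ := aux_mul_id (fun x => K x * x) (5 * L) (by positivity) k1 s1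
  obtain ⟨k3, s3⟩ := aux_mul_id (fun x => K x * x * x) (5 * (5 * L)) (by positivity) k2 s2
  have k0 : ∀ x y, |(|K x|) - (|K y|)| ≤ (L:ℝ) * |x - y| := fun x y =>
    (abs_abs_sub_abs_le_abs_sub _ _).trans (hK0 x y)
  have s0 : ∀ x : ℝ, 1 < |x| → |K x| = 0 := fun x hx => by rw [hKsupp x hx, abs_zero]
  have i1 : ∫ x in (-1:ℝ)..1, K x * x = 0 := aux_odd _ (fun x => by rw [hKeven]; ring)
  have i3 : ∫ x in (-1:ℝ)..1, K x * x * x * x = 0 := aux_odd _ (fun x => by rw [hKeven]; ring)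
  have i2 : ∫ x in (-1:ℝ)..1, K x * x * x = κ₂ := by
    rw [hκ₂]; congr 1; ext x; ring
  obtain ⟨M0, hM0⟩ := isCompact_Icc.exists_bound_of_continuousOn
    (fun x hx => (hm x hx).continuousWithinAt : ContinuousOn m (Icc 0 1))
  obtain ⟨M1, hM1⟩ := isCompact_Icc.exists_bound_of_continuousOn
    (fun x hx => (hm' x hx).continuousWithinAt : ContinuousOn m' (Icc 0 1))
  obtain ⟨M2, hM2⟩ := isCompact_Icc.exists_bound_of_continuousOn hm''c
  simp only [Real.norm_eq_abs] at hM0 hM1 hM2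
  have z01 : (0:ℝ) ∈ Icc (0:ℝ) 1 := by simp
  have hM0p := (abs_nonneg _).trans (hM0 0 z01)
  have hM1p := (abs_nonneg _).trans (hM1 0 z01)
  have hM2p := (abs_nonneg _).trans (hM2 0 z01)
  obtain ⟨J, hJ⟩ : ∃ J, J = ∫ x in (-1:ℝ)..1, |K x| := ⟨_, rfl⟩
  have hJ0 : 0 ≤ J := by
    rw [hJ]; exact intervalIntegral.integral_nonneg (by norm_num) (fun _ _ => abs_nonneg _)
  obtain ⟨A, hA⟩ : ∃ A : ℝ, A = 4 * (5 * (5 * (5 * (L:ℝ)))) := ⟨_, rfl⟩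
  have hA0 : 0 ≤ A := by rw [hA]; positivity
  refine ⟨(M0 * A + M1 * A + M2 * A + Lm * (J + A)) / κ₂ + 1, by positivity, ?_⟩
  intro n hn b hb hnb t ht
  obtain ⟨hb0, hb2⟩ := hb
  have hn0 : (0:ℝ) < n := by exact_mod_cast hn
  have ht01 : t ∈ Icc (0:ℝ) 1 := ⟨by linarith [ht.1], by linarith [ht.2]⟩
  obtain ⟨h, hh⟩ : ∃ h : ℝ, h = 1 / (n * b) := ⟨_, rfl⟩
  have hh0 : 0 < h := by rw [hh]; positivity
  have hh1 : h ≤ 1 := by rw [hh, div_le_one (by positivity)]; exact hnb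
  have hsl : 1 ≤ t / b := by rw [le_div_iff₀ hb0]; linarith [ht.1]
  have hsr : 1 ≤ n * h - t / b := by
    have : n * h - t / b = (1 - t) / b := by rw [hh]; field_simp
    rw [this, le_div_iff₀ hb0]; linarith [ht.2]
  have r0 := aux_riemann _ _ hL0 k0 s0 n h (t / b) hh0 hh1 hsl hsr
  have r1 := aux_riemann _ _ (by positivity) k1 s1 n h (t / b) hh0 hh1 hsl hsr
  have r2 := aux_riemann _ _ (by positivity) k2 s2 n h (t / b) hh0 hh1 hsl hsr
  have r3 := aux_riemann _ _ (by positivity) k3 s3 n h (t / b) hh0 hh1 hsl hsr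
  have hu : ∀ i : ℕ, ((i:ℝ) / n - t) / b = i * h - t / b := by
    intro i; rw [hh]; field_simp
  obtain ⟨u, hudef⟩ : ∃ u : ℕ → ℝ, ∀ i, u i = i * h - t / b := ⟨_, fun _ => rfl⟩
  have hx : ∀ i : ℕ, (i:ℝ) / n - t = b * u i := by
    intro i; rw [hudef, ← hu]; field_simp
  rw [i1] at r1
  rw [i2] at r2
  rw [i3] at r3
  rw [← hJ] at r0
  simp only [hu]
  simp only [← hudef] at r0 r1 r2 r3 ⊢
  obtain ⟨R, hR⟩ : ∃ R : ℕ → ℝ, ∀ i, R i = m ((i:ℝ)/n) - m t - m' t * (b * u i)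
    - m'' t / 2 * (b * u i)^2 := ⟨_, fun _ => rfl⟩
  have hRb : ∀ i ∈ Finset.Icc 1 n, |R i| ≤ Lm * |b * u i|^3 := by
    intro i hi
    rw [Finset.mem_Icc] at hi
    have hi2 : (i:ℝ) ≤ n := by exact_mod_cast hi.2
    have := hT t ht01 ((i:ℝ)/n) ⟨by positivity, by rw [div_le_one hn0]; exact hi2⟩
    rw [hx] at this
    rw [hR]; exact this
  have hrem : |h * ∑ i ∈ Finset.Icc 1 n, K (u i) * u i * R i| ≤ Lm * b^3 * (J + A) := by
    rw [abs_mul, abs_of_pos hh0]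
    have e1 : |∑ i ∈ Finset.Icc 1 n, K (u i) * u i * R i|
        ≤ ∑ i ∈ Finset.Icc 1 n, Lm * b^3 * |K (u i)| := by
      refine (Finset.abs_sum_le_sum_abs _ _).trans (Finset.sum_le_sum fun i hi => ?_)
      by_cases hui : 1 < |u i|
      · rw [hKsupp _ hui]; simp
      · push Not at hui
        rw [abs_mul, abs_mul]
        have h1 := hRb i hi
        have h2 : |b * u i|^3 ≤ b^3 := by
          rw [abs_mul, abs_of_pos hb0]
          have : b * |u i| ≤ b := by nlinarith
          gcongr
        have h3 : |R i| ≤ Lm * b^3 := h1.trans (by gcongr)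
        calc |K (u i)| * |u i| * |R i| ≤ |K (u i)| * 1 * (Lm * b^3) := by gcongr
          _ = _ := by ring
    have e2 : h * ∑ i ∈ Finset.Icc 1 n, |K (u i)| ≤ J + A := by
      have := (abs_le.mp r0).2
      have : 4 * (L:ℝ) * h ≤ A := by rw [hA]; nlinarith
      linarith
    rw [← Finset.mul_sum] at e1
    calc _ ≤ h * (Lm * b^3 * ∑ i ∈ Finset.Icc 1 n, |K (u i)|) := by gcongr
      _ = Lm * b^3 * (h * ∑ i ∈ Finset.Icc 1 n, |K (u i)|) := by ring
      _ ≤ _ := by gcongr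
  have hLh : 0 ≤ (L:ℝ) * h := by positivity
  obtain ⟨S1, hS1⟩ : ∃ S, S = h * ∑ i ∈ Finset.Icc 1 n, K (u i) * u i := ⟨_, rfl⟩
  obtain ⟨S2, hS2⟩ : ∃ S, S = h * ∑ i ∈ Finset.Icc 1 n, K (u i) * u i * u i := ⟨_, rfl⟩
  obtain ⟨S3, hS3⟩ : ∃ S, S = h * ∑ i ∈ Finset.Icc 1 n, K (u i) * u i * u i * u i := ⟨_, rfl⟩
  obtain ⟨Q, hQ⟩ : ∃ S, S = h * ∑ i ∈ Finset.Icc 1 n, K (u i) * u i * R i := ⟨_, rfl⟩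
  have r1' : |S1| ≤ A * h := by
    rw [← hS1, sub_zero] at r1; refine r1.trans ?_; rw [hA]; linarith
  have r2' : |S2 - κ₂| ≤ A * h := by
    rw [← hS2] at r2; refine r2.trans ?_; rw [hA]; linarith
  have r3' : |S3| ≤ A * h := by
    rw [← hS3, sub_zero] at r3; refine r3.trans ?_; rw [hA]
  rw [← hQ] at hrem
  have hdec : (1 / ((n:ℝ) * b^2)) * ∑ i ∈ Finset.Icc 1 n, (K (u i) * u i / κ₂) * m ((i:ℝ)/n) - m' t
      = (m t * S1 + m' t * b * (S2 - κ₂) + m'' t / 2 * b^2 * S3 + Q) / (b * κ₂) := by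
    have e1 : ∑ i ∈ Finset.Icc 1 n, (K (u i) * u i / κ₂) * m ((i:ℝ)/n)
        = (m t * (∑ i ∈ Finset.Icc 1 n, K (u i) * u i)
          + m' t * b * (∑ i ∈ Finset.Icc 1 n, K (u i) * u i * u i)
          + m'' t / 2 * b^2 * (∑ i ∈ Finset.Icc 1 n, K (u i) * u i * u i * u i)
          + ∑ i ∈ Finset.Icc 1 n, K (u i) * u i * R i) / κ₂ := by
      simp only [Finset.mul_sum, Finset.sum_div, ← Finset.sum_add_distrib]
      refine Finset.sum_congr rfl fun i _ => ?_
      rw [hR]; ring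
    have e2 : 1 / ((n:ℝ) * b^2) = h / b := by rw [hh]; field_simp
    rw [e1, e2, hS1, hS2, hS3, hQ]
    field_simp
    ring
  have e2 : 1 / ((n:ℝ) * b^2) = h / b := by rw [hh]; field_simp
  rw [hdec, abs_div, abs_of_pos (by positivity : 0 < b * κ₂), div_le_iff₀ (by positivity), e2]
  have hnum : |m t * S1 + m' t * b * (S2 - κ₂) + m'' t / 2 * b^2 * S3 + Q|
      ≤ M0 * (A * h) + M1 * b * (A * h) + M2 / 2 * b^2 * (A * h) + Lm * b^3 * (J + A) := by
    refine (abs_add_le _ _).trans (add_le_add ((abs_add_le _ _).trans (add_le_add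
      ((abs_add_le _ _).trans (add_le_add ?_ ?_)) ?_)) hrem)
    · rw [abs_mul]; have := hM0 t ht01; gcongr
    · rw [abs_mul, abs_mul, abs_of_pos hb0]; have := hM1 t ht01; gcongr
    · rw [abs_mul, abs_mul, abs_div, abs_two, abs_of_pos (pow_pos hb0 2)]
      have := hM2 t ht01; gcongr
  refine hnum.trans ?_
  have e3 : ((M0 * A + M1 * A + M2 * A + Lm * (J + A)) / κ₂ + 1) * (h / b + b^2) * (b * κ₂)
      = (M0 * A + M1 * A + M2 * A + Lm * (J + A)) * (h + b^3) + (h + b^3) * κ₂ := by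
    field_simp
  rw [e3]
  have hb1 : b ≤ 1 := by linarith
  have f1 : M1 * b * (A * h) ≤ M1 * 1 * (A * h) := by gcongr
  have f2 : M2 / 2 * b^2 * (A * h) ≤ M2 * 1 * (A * h) := by
    have : b^2 ≤ 1 := by nlinarith
    gcongr; linarith
  have f3 : 0 ≤ (M0 * A + M1 * A + M2 * A) * b^3 + Lm * (J + A) * h + (h + b^3) * κ₂ := by
    positivity
  linarith
end
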